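/- Let $1 < p < \infty$, let $\mathcal{S}$ be a sparse family in a dyadic grid $\mathscr{D}$, $R$ a cube, and $w$ a weight with $\sigma = w^{1-p'}$. Then $\int_R M^{\mathcal{S}}(\chi_R \sigma)^p w \, dx \lesssim (1 + \log[\sigma]_{A_{p'}}) \, [\sigma]^p_{(A_{p'})^{1/p'}(A_\infty)^{1/p}} \, \sigma(R)$, where $M^{\mathcal{S}} f = \sum_{Q\in\mathcal{S}}(\fint_Q f)\chi_{E_Q}$ and the $E_Q$ are the pairwise disjoint major subsets of the sparse cubes. -/

import Mathlib

open MeasureTheory Set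
open scoped ENNReal

noncomputable section

/-- A (closed, axis-parallel, nondegenerate) cube in `ℝⁿ`. -/
def IsCube {n : ℕ} (Q : Set (Fin n → ℝ)) : Prop :=
  ∃ (a : Fin n → ℝ) (l : ℝ), 0 < l ∧ Q = Set.Icc a (a + fun _ => l)

/-- The average `⨍_Q f` of `f` over `Q` (w.r.t. Lebesgue measure). -/
def avg {n : ℕ} (Q : Set (Fin n → ℝ)) (f : (Fin n → ℝ) → ℝ) : ℝ :=
  (volume Q).toReal⁻¹ * ∫ x in Q, f x

/-- The `A_p` quantity `A_p(w,Q) = (⨍_Q w) (⨍_Q w^{-1/(p-1)})^{p-1}`. -/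
def ApQ {n : ℕ} (p : ℝ) (w : (Fin n → ℝ) → ℝ) (Q : Set (Fin n → ℝ)) : ℝ :=
  avg Q w * (avg Q fun x => w x ^ (-(1 / (p - 1)))) ^ (p - 1)

/-- The exponential `A_∞` quantity `A_∞^exp(w,Q) = (⨍_Q w) exp(-⨍_Q log w)`. -/
def AexpQ {n : ℕ} (w : (Fin n → ℝ) → ℝ) (Q : Set (Fin n → ℝ)) : ℝ :=
  avg Q w * Real.exp (-(avg Q fun x => Real.log (w x)))

/-- A dyadic cube of generation `k` (half-open, side length `2^k`). -/
def IsDyadicCubeOf {n : ℕ} (k : ℤ) (Q : Set (Fin n → ℝ)) : Prop :=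
  ∃ a : Fin n → ℝ, Q = Set.univ.pi fun i => Set.Ico (a i) (a i + (2 : ℝ) ^ k)

/-- A dyadic grid: a collection of cubes of side lengths `2^k`, pairwise nested or
disjoint, partitioning `ℝⁿ` at each scale. -/
def IsDyadicGrid {n : ℕ} (𝒟 : Set (Set (Fin n → ℝ))) : Prop :=
  (∀ Q ∈ 𝒟, ∃ k : ℤ, IsDyadicCubeOf k Q) ∧
  (∀ Q ∈ 𝒟, ∀ P ∈ 𝒟, Q ⊆ P ∨ P ⊆ Q ∨ Disjoint Q P) ∧
  (∀ k : ℤ, ⋃₀ {Q | Q ∈ 𝒟 ∧ IsDyadicCubeOf k Q} = Set.univ ∧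
    Set.PairwiseDisjoint {Q | Q ∈ 𝒟 ∧ IsDyadicCubeOf k Q} id)

/-- The union of the strict subcubes of `Q` belonging to the family `𝒮`. -/
def strictUnion {n : ℕ} (𝒮 : Set (Set (Fin n → ℝ))) (Q : Set (Fin n → ℝ)) :
    Set (Fin n → ℝ) :=
  ⋃ Q' ∈ {Q' | Q' ∈ 𝒮 ∧ Q' ⊂ Q}, Q'

/-- The "major subset" `E_Q = Q \ ⋃ {Q' ∈ 𝒮 : Q' ⊊ Q}`. -/
def Eset {n : ℕ} (𝒮 : Set (Set (Fin n → ℝ))) (Q : Set (Fin n → ℝ)) :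
    Set (Fin n → ℝ) :=
  Q \ strictUnion 𝒮 Q

/-- A sparse family: for each `Q ∈ 𝒮`, `|⋃ {Q' ∈ 𝒮 : Q' ⊊ Q}| ≤ |Q|/2`. -/
def IsSparse {n : ℕ} (𝒮 : Set (Set (Fin n → ℝ))) : Prop :=
  ∀ Q ∈ 𝒮, volume (strictUnion 𝒮 Q) ≤ volume Q / 2

/-- The Hardy–Littlewood maximal operator (over cubes). -/
def maxHL {n : ℕ} (f : (Fin n → ℝ) → ℝ) (x : Fin n → ℝ) : ℝ≥0∞ :=
  ⨆ (Q : Set (Fin n → ℝ)) (_ : IsCube Q ∧ x ∈ Q), ENNReal.ofReal (avg Q fun y => |f y|)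

/-- The Fujii–Wilson quantity `A_∞(w,Q) = (1/w(Q)) ∫_Q M(w χ_Q)`. -/
def AinfFWr {n : ℕ} (w : (Fin n → ℝ) → ℝ) (Q : Set (Fin n → ℝ)) : ℝ :=
  (∫⁻ x in Q, maxHL (Q.indicator w) x).toReal / ∫ x in Q, w x

/-- The sparse "maximal" operator `M^𝒮 f = ∑_{Q ∈ 𝒮} (⨍_Q f) χ_{E_Q}`. -/
def sparseM {n : ℕ} (𝒮 : Set (Set (Fin n → ℝ))) (f : (Fin n → ℝ) → ℝ)
    (x : Fin n → ℝ) : ℝ≥0∞ :=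
  ∑' Q : 𝒮, Set.indicator (Eset 𝒮 Q.1) (fun _ => ENNReal.ofReal (avg Q.1 f)) x

/-- The closed cube with lower corner `a` and side length `l`. -/
def cube {n : ℕ} (a : Fin n → ℝ) (l : ℝ) : Set (Fin n → ℝ) :=
  Set.Icc a (a + fun _ => l)

/-- The half-open cube with lower corner `a` and side length `l`. -/
def hcube {n : ℕ} (a : Fin n → ℝ) (l : ℝ) : Set (Fin n → ℝ) :=
  Set.univ.pi fun i => Set.Ico (a i) (a i + l)

section Cubes

variable {n : ℕ} {a c : Fin n → ℝ} {l L : ℝ}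

lemma isCube_cube (hl : 0 < l) : IsCube (cube a l) := ⟨a, l, hl, rfl⟩

lemma hcube_ae_eq_cube : (hcube a l : Set (Fin n → ℝ)) =ᵐ[volume] cube a l :=
  Measure.univ_pi_Ico_ae_eq_Icc (f := a) (g := a + fun _ => l)

lemma mem_cube {x : Fin n → ℝ} : x ∈ cube a l ↔ ∀ i, a i ≤ x i ∧ x i ≤ a i + l := by
  simp [cube, Set.mem_Icc, Pi.le_def, forall_and]

lemma mem_hcube {x : Fin n → ℝ} : x ∈ hcube a l ↔ ∀ i, a i ≤ x i ∧ x i < a i + l := by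
  simp [hcube, Set.mem_pi]

lemma volume_cube (hl : 0 ≤ l) : volume (cube a l) = ENNReal.ofReal (l ^ n) := by
  simp [cube, Real.volume_Icc_pi, ENNReal.ofReal_pow hl]

lemma volume_hcube (hl : 0 ≤ l) : volume (hcube a l) = ENNReal.ofReal (l ^ n) := by
  rw [measure_congr hcube_ae_eq_cube, volume_cube hl]

lemma measurableSet_cube : MeasurableSet (cube a l) := measurableSet_Icc

lemma measurableSet_hcube : MeasurableSet (hcube a l) :=
  MeasurableSet.univ_pi fun _ => measurableSet_Ico

lemma hcube_subset_cube : hcube a l ⊆ cube a l := fun x hx => by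
  rw [mem_hcube] at hx
  rw [mem_cube]
  exact fun i => ⟨(hx i).1, (hx i).2.le⟩

lemma isCompact_cube : IsCompact (cube a l) := isCompact_Icc

lemma cube_eq_closedBall (hl : 0 ≤ l) :
    cube a l = Metric.closedBall (a + fun _ => l / 2) (l / 2) := by
  ext x
  rw [mem_cube, Metric.mem_closedBall, dist_pi_le_iff (by positivity)]
  refine forall_congr' fun i => ?_
  rw [Real.dist_eq, abs_le, Pi.add_apply]
  constructor
  · rintro ⟨h1, h2⟩; constructor <;> linarith
  · rintro ⟨h1, h2⟩; constructor <;> linarith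

/-- The lower corner of a cube of side `l` inside `cube c L` that is as close as possible to
`cube a l`. -/
def shiftCorner (c : Fin n → ℝ) (L : ℝ) (a : Fin n → ℝ) (l : ℝ) : Fin n → ℝ :=
  fun i => max (c i) (min (a i) (c i + L - l))

/-- Reflection of some of the coordinates in the faces of `cube c L`. -/
def reflect (c : Fin n → ℝ) (L : ℝ) (e : Fin n → Fin 3) (x : Fin n → ℝ) : Fin n → ℝ :=
  fun i => if e i = 0 then x i else if e i = 1 then 2 * c i - x i else 2 * (c i + L) - x i

/-- Projection onto a face of `cube c L`. -/
def faceProj (c : Fin n → ℝ) (L : ℝ) (e : Fin n → Fin 3) (x : Fin n → ℝ) : Fin n → ℝ :=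
  fun i => if e i = 0 then x i else if e i = 1 then c i else c i + L

lemma cube_shiftCorner_subset (hlL : l ≤ L) : cube (shiftCorner c L a l) l ⊆ cube c L := by
  intro x hx
  rw [mem_cube] at *
  intro i
  have := hx i
  simp only [shiftCorner] at this
  refine ⟨(le_max_left _ _).trans this.1, this.2.trans ?_⟩
  have : max (c i) (min (a i) (c i + L - l)) ≤ c i + L - l :=
    max_le (by linarith) (min_le_right _ _)
  linarith

lemma inter_subset_shift (hlL : l ≤ L) :
    hcube a l ∩ cube c L ⊆ cube (shiftCorner c L a l) l := by
  rintro x ⟨hx, hxR⟩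
  rw [mem_cube] at *
  rw [mem_hcube] at hx
  intro i
  have h1 := hx i
  have h2 := hxR i
  simp only [shiftCorner]
  rcases max_cases (c i) (min (a i) (c i + L - l)) with h | h <;>
  rcases min_cases (a i) (c i + L - l) with h' | h' <;>
  constructor <;> linarith

lemma exists_reflect (x : Fin n → ℝ) : ∃ e : Fin n → Fin 3, ∀ (a : Fin n → ℝ) (l : ℝ),
    l ≤ L → (hcube a l ∩ cube c L).Nonempty → x ∈ hcube a l →
      reflect c L e x ∈ cube (shiftCorner c L a l) l := by
  refine ⟨fun i => if x i < c i then 1 else if c i + L < x i then 2 else 0, ?_⟩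
  rintro a l hlL ⟨y, hy, hyR⟩ hx
  rw [mem_cube] at *
  rw [mem_hcube] at *
  intro i
  have h1 := hx i
  have h2 := hy i
  have h3 := hyR i
  have hcase : (x i < c i ∧ reflect c L (fun i => if x i < c i then 1 else
        if c i + L < x i then 2 else 0) x i = 2 * c i - x i) ∨
      (c i + L < x i ∧ reflect c L (fun i => if x i < c i then 1 else
        if c i + L < x i then 2 else 0) x i = 2 * (c i + L) - x i) ∨
      (c i ≤ x i ∧ x i ≤ c i + L ∧ reflect c L (fun i => if x i < c i then 1 else
        if c i + L < x i then 2 else 0) x i = x i) := by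
    by_cases h4 : x i < c i
    · left; simp [reflect, h4]
    · by_cases h5 : c i + L < x i
      · right; left; simp [reflect, h4, h5]
      · right; right; simp [reflect, h4, h5, not_lt.1 h4, not_lt.1 h5]
  simp only [shiftCorner]
  rcases hcase with ⟨h4, h5⟩ | ⟨h4, h5⟩ | ⟨h4, h4', h5⟩ <;> rw [h5] <;>
  rcases max_cases (c i) (min (a i) (c i + L - l)) with h | h <;>
  rcases min_cases (a i) (c i + L - l) with h' | h' <;>
  constructor <;> linarith

lemma exists_faceProj (hne : (hcube a l ∩ cube c L).Nonempty)
    {y : Fin n → ℝ} (hy : y ∈ hcube (shiftCorner c L a l) l) :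
    ∃ e : Fin n → Fin 3, faceProj c L e y ∈ hcube a l := by
  obtain ⟨x, hx, hxR⟩ := hne
  refine ⟨fun i => if a i < c i then 1 else if c i + L - l < a i then 2 else 0, ?_⟩
  rw [mem_cube] at *
  rw [mem_hcube] at *
  intro i
  have h1 := hx i
  have h2 := hy i
  have h3 := hxR i
  have hcase : (a i < c i ∧ faceProj c L (fun i => if a i < c i then 1 else
        if c i + L - l < a i then 2 else 0) y i = c i) ∨
      (c i + L - l < a i ∧ faceProj c L (fun i => if a i < c i then 1 else
        if c i + L - l < a i then 2 else 0) y i = c i + L) ∨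
      (c i ≤ a i ∧ a i ≤ c i + L - l ∧ faceProj c L (fun i => if a i < c i then 1 else
        if c i + L - l < a i then 2 else 0) y i = y i) := by
    by_cases h4 : a i < c i
    · left; simp [faceProj, h4]
    · by_cases h5 : c i + L - l < a i
      · right; left; simp [faceProj, h4, h5]
      · right; right
        refine ⟨not_lt.1 h4, not_lt.1 h5, ?_⟩
        simp only [faceProj, h4, h5, if_false, if_true]
  simp only [shiftCorner] at h2
  rcases hcase with ⟨h4, h5⟩ | ⟨h4, h5⟩ | ⟨h4, h4', h5⟩ <;> rw [h5] <;>
  rcases max_cases (c i) (min (a i) (c i + L - l)) with h | h <;>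
  rcases min_cases (a i) (c i + L - l) with h' | h' <;>
  constructor <;> linarith

lemma reflect_reflect (e : Fin n → Fin 3) (x : Fin n → ℝ) :
    reflect c L e (reflect c L e x) = x := by
  ext i
  simp only [reflect]
  split_ifs <;> ring

lemma measurePreserving_reflect (e : Fin n → Fin 3) :
    MeasurePreserving (reflect c L e) volume volume := by
  have h : ∀ i, MeasurePreserving (fun t : ℝ => if e i = 0 then t else
      if e i = 1 then 2 * c i - t else 2 * (c i + L) - t) volume volume := by
    intro i
    split_ifs
    · exact MeasurePreserving.id _
    · exact Measure.measurePreserving_sub_left _ _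
    · exact Measure.measurePreserving_sub_left _ _
  exact volume_preserving_pi h

lemma measurable_faceProj (e : Fin n → Fin 3) : Measurable (faceProj c L e) := by
  refine measurable_pi_lambda _ fun i => ?_
  simp only [faceProj]
  split_ifs
  · exact measurable_pi_apply i
  · exact measurable_const
  · exact measurable_const

end Cubes

section Weights

variable {n : ℕ} {a : Fin n → ℝ} {l : ℝ} {f w σ : (Fin n → ℝ) → ℝ}

lemma volume_cube_toReal (hl : 0 ≤ l) : (volume (cube a l)).toReal = l ^ n := by
  rw [volume_cube hl, ENNReal.toReal_ofReal (by positivity)]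

lemma avg_cube (hl : 0 ≤ l) : avg (cube a l) f = (l ^ n)⁻¹ * ∫ x in cube a l, f x := by
  rw [avg, volume_cube_toReal hl]

lemma integrableOn_cube (hf : LocallyIntegrable f volume) : IntegrableOn f (cube a l) :=
  hf.integrableOn_isCompact isCompact_cube

lemma ofReal_setIntegral_cube (hf : LocallyIntegrable f volume) (h0 : ∀ x, 0 < f x) :
    ENNReal.ofReal (∫ x in cube a l, f x) = ∫⁻ x in cube a l, ENNReal.ofReal (f x) :=
  ofReal_integral_eq_lintegral_ofReal (integrableOn_cube hf)
    (Filter.Eventually.of_forall fun x => (h0 x).le)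

lemma setIntegral_cube_pos (hl : 0 < l) (hf : LocallyIntegrable f volume) (h0 : ∀ x, 0 < f x) :
    0 < ∫ x in cube a l, f x := by
  rw [setIntegral_pos_iff_support_of_nonneg_ae (Filter.Eventually.of_forall fun x => (h0 x).le)
    (integrableOn_cube hf)]
  have : Function.support f = univ := by
    ext x; simp [(h0 x).ne']
  rw [this, univ_inter, volume_cube hl.le]
  simp; positivity

lemma avg_cube_pos (hl : 0 < l) (hf : LocallyIntegrable f volume) (h0 : ∀ x, 0 < f x) :
    0 < avg (cube a l) f := by
  rw [avg_cube hl.le]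
  have := setIntegral_cube_pos (a := a) hl hf h0
  positivity

lemma one_sub_le_rpow_neg {u s : ℝ} (hu : 0 < u) (hs : 0 ≤ s) : 1 - s * (u - 1) ≤ u ^ (-s) := by
  rw [Real.rpow_def_of_pos hu]
  have h1 := Real.add_one_le_exp (Real.log u * -s)
  have h2 := mul_le_mul_of_nonneg_left (Real.log_le_sub_one_of_pos hu) hs
  linarith

lemma one_le_avg_mul_avg_rpow {s : ℝ} (hl : 0 < l) (hs : 0 ≤ s) (h0 : ∀ x, 0 < w x)
    (hσ : ∀ x, σ x = w x ^ (-s)) (hwi : LocallyIntegrable w volume)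
    (hσi : LocallyIntegrable σ volume) :
    1 ≤ avg (cube a l) σ * avg (cube a l) w ^ s := by
  set v := avg (cube a l) w with hv
  have hvpos : 0 < v := avg_cube_pos hl hwi h0
  have key : v ^ (-s) ≤ avg (cube a l) σ := by
    have hpt : ∀ x, v ^ (-s) * ((1 + s) - s / v * w x) ≤ σ x := by
      intro x
      rw [hσ]
      have h1 := one_sub_le_rpow_neg (div_pos (h0 x) hvpos) hs
      rw [Real.div_rpow (h0 x).le hvpos.le, le_div_iff₀ (by positivity)] at h1
      refine le_trans (le_of_eq ?_) h1
      field_simp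
      ring
    have hint : Integrable (fun x => v ^ (-s) * ((1 + s) - s / v * w x))
        (volume.restrict (cube a l)) := by
      refine Integrable.const_mul (Integrable.sub ?_ ((integrableOn_cube hwi).const_mul _)) _
      exact integrableOn_const (by rw [volume_cube hl.le]; exact ENNReal.ofReal_ne_top)
    have h2 := integral_mono hint (integrableOn_cube hσi) hpt
    have hvv : ∫ x in cube a l, w x = v * l ^ n := by
      rw [hv, avg_cube hl.le]; field_simp
    rw [integral_const_mul, integral_sub, integral_const_mul, integral_const, hvv,
      measureReal_restrict_apply_univ, measureReal_def, volume_cube_toReal hl.le] at h2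
    · rw [avg_cube hl.le, ← div_eq_inv_mul, le_div_iff₀ (by positivity)]
      refine le_trans (le_of_eq ?_) h2
      simp only [smul_eq_mul]
      field_simp
      ring
    · exact integrableOn_const (by rw [volume_cube hl.le]; exact ENNReal.ofReal_ne_top)
    · exact (integrableOn_cube hwi).const_mul _
  calc (1 : ℝ) = v ^ (-s) * v ^ s := by
        rw [← Real.rpow_add hvpos]; simp
    _ ≤ _ := by gcongr

/-- On a set of at least half of the volume of a cube, an `A_p` weight exceeds a fixed multiple
of its average. -/
lemma volume_cube_le_two_mul {s T : ℝ} (hl : 0 < l) (hs : 0 ≤ s) (h0 : ∀ x, 0 < w x)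
    (hσ : ∀ x, σ x = w x ^ (-s)) (hwi : LocallyIntegrable w volume)
    (hT : 0 < T) (hA : avg (cube a l) σ * avg (cube a l) w ^ s ≤ T) :
    volume (cube a l) ≤
      2 * volume (cube a l ∩ {x | 2 ^ (-s) / T * avg (cube a l) σ ≤ σ x}) := by
  set v := avg (cube a l) w with hv
  have hvpos : 0 < v := avg_cube_pos hl hwi h0
  have hsub : cube a l ⊆ (cube a l ∩ {x | 2 ^ (-s) / T * avg (cube a l) σ ≤ σ x}) ∪
      (cube a l ∩ {x | ENNReal.ofReal (2 * v) ≤ ENNReal.ofReal (w x)}) := by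
    intro x hx
    by_cases h : 2 * v ≤ w x
    · exact Or.inr ⟨hx, ENNReal.ofReal_le_ofReal h⟩
    · refine Or.inl ⟨hx, ?_⟩
      push Not at h
      change _ ≤ σ x
      rw [hσ]
      have h1 : (2 * v) ^ (-s) ≤ w x ^ (-s) :=
        Real.rpow_le_rpow_of_nonpos (h0 x) h.le (by linarith)
      refine le_trans ?_ h1
      rw [Real.mul_rpow (by norm_num) hvpos.le, div_mul_eq_mul_div, mul_div_assoc]
      gcongr
      rw [Real.rpow_neg hvpos.le, div_le_iff₀ hT, ← div_eq_inv_mul, le_div_iff₀ (by positivity)]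
      exact hA
  have hmarkov : ENNReal.ofReal (2 * v) *
      volume (cube a l ∩ {x | ENNReal.ofReal (2 * v) ≤ ENNReal.ofReal (w x)}) ≤
      ENNReal.ofReal v * volume (cube a l) := by
    have hwm : AEMeasurable (fun x => ENNReal.ofReal (w x)) (volume.restrict (cube a l)) :=
      (integrableOn_cube hwi).aemeasurable.ennreal_ofReal
    have h1 := mul_meas_ge_le_lintegral₀ hwm (ENNReal.ofReal (2 * v))
    rw [← ofReal_setIntegral_cube hwi h0, Measure.restrict_apply' measurableSet_cube,
      inter_comm] at h1
    refine h1.trans (le_of_eq ?_)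
    rw [volume_cube hl.le, ← ENNReal.ofReal_mul hvpos.le, hv, avg_cube hl.le]
    congr 1
    field_simp
  have hhalf : 2 * volume (cube a l ∩ {x | ENNReal.ofReal (2 * v) ≤ ENNReal.ofReal (w x)}) ≤
      volume (cube a l) := by
    have hv0 : ENNReal.ofReal v ≠ 0 := by simpa using hvpos
    generalize volume (cube a l ∩ {x | ENNReal.ofReal (2 * v) ≤ ENNReal.ofReal (w x)}) = m
      at hmarkov ⊢
    rw [ENNReal.ofReal_mul (by norm_num), mul_comm (ENNReal.ofReal 2), mul_assoc,
      ENNReal.mul_le_mul_iff_right hv0 ENNReal.ofReal_ne_top] at hmarkov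
    simpa using hmarkov
  have htot := (measure_mono hsub).trans (measure_union_le (μ := volume) _ _)
  have h2 : 2 * volume (cube a l) ≤
      2 * volume (cube a l ∩ {x | 2 ^ (-s) / T * avg (cube a l) σ ≤ σ x}) +
        volume (cube a l) :=
    calc _ ≤ _ := mul_le_mul_right htot 2
      _ ≤ _ := by rw [mul_add]; gcongr
  rw [two_mul] at h2
  exact (ENNReal.add_le_add_iff_right
    (by rw [volume_cube hl.le]; exact ENNReal.ofReal_ne_top)).1 h2

end Weights

section Maximal

variable {n : ℕ} {a : Fin n → ℝ} {l : ℝ} {w σ : (Fin n → ℝ) → ℝ}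

lemma ofReal_avg_le_maxHL {f : (Fin n → ℝ) → ℝ} {b y : Fin n → ℝ} {r : ℝ} (hr : 0 < r)
    (hy : y ∈ cube b r) :
    ENNReal.ofReal (avg (cube b r) fun x => |f x|) ≤ maxHL f y :=
  le_iSup₂_of_le (cube b r) ⟨isCube_cube hr, hy⟩ le_rfl

lemma abs_indicator_of_pos {f : (Fin n → ℝ) → ℝ} (h0 : ∀ x, 0 < f x) (A : Set (Fin n → ℝ)) :
    (fun x => |A.indicator f x|) = A.indicator f := by
  ext x
  exact abs_of_nonneg (Set.indicator_nonneg (fun x _ => (h0 x).le) x)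

lemma volume_level_le {s T t : ℝ} (hl : 0 < l) (hs : 0 ≤ s) (h0 : ∀ x, 0 < w x)
    (hσ : ∀ x, σ x = w x ^ (-s)) (hwi : LocallyIntegrable w volume)
    (hσi : LocallyIntegrable σ volume)
    (hT : 0 < T) (hA : ∀ b r, 0 < r → avg (cube b r) σ * avg (cube b r) w ^ s ≤ T)
    (ht : avg (cube a l) σ ≤ t) :
    volume {x ∈ cube a l | ENNReal.ofReal t < maxHL ((cube a l).indicator σ) x} ≤
      ENNReal.ofReal (5 ^ n) * (2 * volume (cube (a - fun _ => l) (3 * l) ∩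
        {x | 2 ^ (-s) / T * t ≤ σ x})) := by
  have hσ0 : ∀ x, 0 < σ x := fun x => by rw [hσ]; exact Real.rpow_pos_of_pos (h0 x) _
  have htpos : 0 < t := (avg_cube_pos hl hσi hσ0).trans_le ht
  set Q' := cube (a - fun _ => l) (3 * l)
  set N := {x | 2 ^ (-s) / T * t ≤ σ x} with hN
  set F : Set ((Fin n → ℝ) × ℝ) :=
    {q | 0 < q.2 ∧ q.2 ≤ l ∧ cube q.1 q.2 ⊆ Q' ∧ t ≤ avg (cube q.1 q.2) σ} with hF
  obtain ⟨u, huF, hudisj, hucov⟩ := Vitali.exists_disjoint_subfamily_covering_enlargement_closedBall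
    F (fun q => q.1 + fun _ => q.2 / 2) (fun q => q.2 / 2) (l / 2)
    (fun q hq => by have := hq.2.1; linarith) 5 (by norm_num)
  have hucount : u.Countable := by
    refine hudisj.countable_of_nonempty_interior fun q hq => ?_
    refine (Metric.nonempty_ball.2 ?_).mono Metric.ball_subset_interior_closedBall
    have := (huF hq).1
    simpa using this
  have hcov : {x ∈ cube a l | ENNReal.ofReal t < maxHL ((cube a l).indicator σ) x} ⊆
      ⋃ q ∈ u, Metric.closedBall (q.1 + fun _ => q.2 / 2) (5 * (q.2 / 2)) := by
    rintro x ⟨hxQ, hx⟩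
    simp only [maxHL, lt_iSup_iff] at hx
    obtain ⟨_, ⟨⟨b, r, hr, rfl⟩, hxB⟩, hx⟩ := hx
    change x ∈ cube b r at hxB
    change _ < ENNReal.ofReal (avg (cube b r) _) at hx
    rw [abs_indicator_of_pos hσ0, ENNReal.ofReal_lt_ofReal_iff', avg_cube hr.le,
      setIntegral_indicator measurableSet_cube, ← div_eq_inv_mul, lt_div_iff₀ (by positivity)] at hx
    have h1 : ∫ x in cube b r ∩ cube a l, σ x ≤ ∫ x in cube b r, σ x :=
      setIntegral_mono_set (integrableOn_cube hσi)
        (Filter.Eventually.of_forall fun x => (hσ0 x).le) inter_subset_left.eventuallyLE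
    have h2 : ∫ x in cube b r ∩ cube a l, σ x ≤ ∫ x in cube a l, σ x :=
      setIntegral_mono_set (integrableOn_cube hσi)
        (Filter.Eventually.of_forall fun x => (hσ0 x).le) inter_subset_right.eventuallyLE
    have h3 : r < l := by
      rw [avg_cube hl.le, ← div_eq_inv_mul, div_le_iff₀ (by positivity)] at ht
      have h4 : t * r ^ n < t * l ^ n := by linarith [hx.1]
      exact lt_of_pow_lt_pow_left₀ n hl.le (lt_of_mul_lt_mul_left h4 htpos.le)
    have hmem : (b, r) ∈ F := by
      refine ⟨hr, h3.le, ?_, ?_⟩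
      · intro y hy
        simp only [Q', mem_cube, Pi.sub_apply] at *
        intro i
        have := hy i
        have := hxB i
        have := hxQ i
        constructor <;> linarith
      · rw [avg_cube hr.le, ← div_eq_inv_mul, le_div_iff₀ (by positivity)]
        linarith [hx.1]
    obtain ⟨q, hq, hsub⟩ := hucov _ hmem
    refine mem_iUnion₂.2 ⟨q, hq, hsub ?_⟩
    simpa only [cube_eq_closedBall hr.le] using hxB
  have hmeas : ∀ q ∈ u, MeasurableSet (cube q.1 q.2) := fun q _ => measurableSet_cube
  have hdisj' : u.PairwiseDisjoint fun q => cube q.1 q.2 := by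
    intro q hq q' hq' hne
    have := hudisj hq hq' hne
    simp only [Function.onFun] at *
    rwa [cube_eq_closedBall (huF hq).1.le, cube_eq_closedBall (huF hq').1.le]
  calc volume {x ∈ cube a l | ENNReal.ofReal t < maxHL ((cube a l).indicator σ) x}
      ≤ volume (⋃ q ∈ u, Metric.closedBall (q.1 + fun _ => q.2 / 2) (5 * (q.2 / 2))) :=
        measure_mono hcov
    _ ≤ ∑' q : u, volume (Metric.closedBall (q.1.1 + fun _ => q.1.2 / 2) (5 * (q.1.2 / 2))) :=
        measure_biUnion_le _ hucount _
    _ ≤ ∑' q : u, ENNReal.ofReal (5 ^ n) * (2 * (volume.restrict N) (cube q.1.1 q.1.2)) := by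
        refine ENNReal.tsum_le_tsum fun q => ?_
        obtain ⟨hq0, -, -, hqt⟩ := huF q.2
        rw [Real.volume_pi_closedBall _ (by linarith), Fintype.card_fin,
          show 2 * (5 * (q.1.2 / 2)) = 5 * q.1.2 by ring, mul_pow,
          ENNReal.ofReal_mul (by positivity), ← volume_cube (a := q.1.1) hq0.le]
        gcongr
        refine (volume_cube_le_two_mul hq0 hs h0 hσ hwi hT (hA _ _ hq0)).trans ?_
        rw [Measure.restrict_apply measurableSet_cube]
        gcongr
        intro x (hx : _ ≤ σ x)
        refine le_trans ?_ hx
        gcongr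
    _ = ENNReal.ofReal (5 ^ n) * (2 * (volume.restrict N) (⋃ q ∈ u, cube q.1 q.2)) := by
        rw [measure_biUnion hucount hdisj' hmeas, ENNReal.tsum_mul_left, ENNReal.tsum_mul_left]
    _ ≤ ENNReal.ofReal (5 ^ n) * (2 * (volume.restrict N) Q') := by
        gcongr
        exact iUnion₂_subset fun q hq => (huF hq).2.2.1
    _ = _ := by rw [Measure.restrict_apply measurableSet_cube]

lemma sum_range_two_pow_le {t : ℝ} (ht : 0 ≤ t) (N : ℕ) :
    ∑ k ∈ Finset.range N, (if (2 : ℝ) ^ k ≤ t then (2 : ℝ) ^ k else 0) ≤ min (2 * t) (2 ^ N) := by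
  induction N with
  | zero => simp [ht]
  | succ N ih =>
    rw [Finset.sum_range_succ]
    rw [le_min_iff] at ih ⊢
    split_ifs with h
    · rw [pow_succ]
      constructor <;> linarith
    · have : (0 : ℝ) < 2 ^ N := by positivity
      rw [pow_succ]
      constructor <;> linarith

lemma tsum_two_pow_le {t : ℝ} (ht : 0 ≤ t) :
    ∑' k : ℕ, (if (2 : ℝ) ^ k ≤ t then ENNReal.ofReal (2 ^ k) else 0) ≤
      ENNReal.ofReal (2 * t) := by
  refine ENNReal.tsum_le_of_sum_range_le fun N => ?_
  have h : ∀ k : ℕ, (if (2 : ℝ) ^ k ≤ t then ENNReal.ofReal (2 ^ k) else 0) =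
      ENNReal.ofReal (if (2 : ℝ) ^ k ≤ t then (2 : ℝ) ^ k else 0) := by
    intro k; split_ifs <;> simp
  simp_rw [h]
  rw [← ENNReal.ofReal_sum_of_nonneg (fun k _ => by split_ifs <;> positivity)]
  exact ENNReal.ofReal_le_ofReal ((sum_range_two_pow_le ht N).trans (min_le_left _ _))

lemma le_add_tsum_two_pow {t : ℝ} (ht : 0 < t) (m : ℝ≥0∞) :
    m ≤ ENNReal.ofReal t + ∑' k : ℕ,
      (if ENNReal.ofReal (2 ^ k * t) < m then ENNReal.ofReal (2 * t) * ENNReal.ofReal (2 ^ k)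
        else 0) := by
  refine le_of_forall_lt_imp_le_of_dense fun b hb => ?_
  lift b to NNReal using hb.ne_top
  rcases lt_or_ge (b : ℝ) t with h | h
  · refine le_add_right ?_
    rw [← ENNReal.ofReal_coe_nnreal]
    exact ENNReal.ofReal_le_ofReal h.le
  · obtain ⟨k, hk1, hk2⟩ := exists_nat_pow_near ((one_le_div ht).2 h) one_lt_two
    rw [le_div_iff₀ ht] at hk1
    rw [div_lt_iff₀ ht] at hk2
    refine le_add_left (le_trans ?_ (ENNReal.le_tsum k))
    rw [if_pos, ← ENNReal.ofReal_mul (by positivity), ← ENNReal.ofReal_coe_nnreal]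
    · refine ENNReal.ofReal_le_ofReal (hk2.le.trans (le_of_eq ?_))
      rw [pow_succ]; ring
    · refine lt_of_le_of_lt ?_ hb
      rw [← ENNReal.ofReal_coe_nnreal]
      exact ENNReal.ofReal_le_ofReal hk1

/-- The local maximal function of an `A_p` weight is integrable. -/
lemma lintegral_maxHL_ne_top {s T : ℝ} (hl : 0 < l) (hs : 0 ≤ s) (h0 : ∀ x, 0 < w x)
    (hσ : ∀ x, σ x = w x ^ (-s)) (hwi : LocallyIntegrable w volume)
    (hσi : LocallyIntegrable σ volume)
    (hT : 0 < T) (hA : ∀ b r, 0 < r → avg (cube b r) σ * avg (cube b r) w ^ s ≤ T) :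
    ∫⁻ x in cube a l, maxHL ((cube a l).indicator σ) x ≠ ∞ := by
  have hσ0 : ∀ x, 0 < σ x := fun x => by rw [hσ]; exact Real.rpow_pos_of_pos (h0 x) _
  set t := avg (cube a l) σ with ht
  have htpos : 0 < t := avg_cube_pos hl hσi hσ0
  set κ : ℝ := 2 ^ (-s) / T with hκ
  have hκpos : 0 < κ := by positivity
  set Q' := cube (a - fun _ => l) (3 * l) with hQ'
  let G : ℕ → Set (Fin n → ℝ) := fun k => toMeasurable volume
    {x ∈ cube a l | ENNReal.ofReal (2 ^ k * t) < maxHL ((cube a l).indicator σ) x}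
  have hGm : ∀ k, MeasurableSet (G k) := fun k => measurableSet_toMeasurable _ _
  have hGvol : ∀ k, volume (G k) ≤ ENNReal.ofReal (5 ^ n) *
      (2 * volume (Q' ∩ {x | κ * (2 ^ k * t) ≤ σ x})) := fun k => by
    simp only [G, measure_toMeasurable]
    refine volume_level_le hl hs h0 hσ hwi hσi hT hA ?_
    have : (1 : ℝ) ≤ 2 ^ k := one_le_pow₀ one_le_two
    nlinarith
  have hpt : ∀ x ∈ cube a l, maxHL ((cube a l).indicator σ) x ≤ ENNReal.ofReal t +
      ∑' k, (G k).indicator (fun _ => ENNReal.ofReal (2 * t) * ENNReal.ofReal (2 ^ k)) x := by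
    intro x hx
    refine (le_add_tsum_two_pow htpos _).trans ?_
    gcongr with k
    split_ifs with h
    · rw [indicator_of_mem]
      exact subset_toMeasurable _ _ ⟨hx, h⟩
    · exact zero_le
  have hN : ∀ k : ℕ, NullMeasurableSet {x | κ * (2 ^ k * t) ≤ σ x} (volume.restrict Q') := fun k =>
    nullMeasurableSet_le aemeasurable_const (integrableOn_cube hσi).aemeasurable
  have hfin : ∫⁻ x in cube a l, (ENNReal.ofReal t +
      ∑' k, (G k).indicator (fun _ => ENNReal.ofReal (2 * t) * ENNReal.ofReal (2 ^ k)) x) < ∞ := by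
    rw [lintegral_add_left measurable_const, setLIntegral_const, lintegral_tsum
      (fun k => (measurable_const.indicator (hGm k)).aemeasurable)]
    refine ENNReal.add_lt_top.2 ⟨?_, ?_⟩
    · rw [volume_cube hl.le, ← ENNReal.ofReal_mul htpos.le]
      exact ENNReal.ofReal_lt_top
    calc ∑' k, ∫⁻ x in cube a l,
          (G k).indicator (fun _ => ENNReal.ofReal (2 * t) * ENNReal.ofReal (2 ^ k)) x
        ≤ ∑' k : ℕ, (ENNReal.ofReal (2 * t) * (ENNReal.ofReal (5 ^ n) * 2)) *
          ∫⁻ x in Q', {x | κ * (2 ^ k * t) ≤ σ x}.indicator (fun _ => ENNReal.ofReal (2 ^ k)) x := by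
          refine ENNReal.tsum_le_tsum fun k => ?_
          rw [lintegral_indicator_const (hGm k), lintegral_indicator_const₀ (hN k)]
          calc _ ≤ ENNReal.ofReal (2 * t) * ENNReal.ofReal (2 ^ k) * (ENNReal.ofReal (5 ^ n) *
                (2 * volume (Q' ∩ {x | κ * (2 ^ k * t) ≤ σ x}))) := by
                gcongr
                exact (Measure.restrict_apply_le _ _).trans (hGvol k)
            _ = _ := by
                rw [Measure.restrict_apply' measurableSet_cube, inter_comm]
                ring
      _ = (ENNReal.ofReal (2 * t) * (ENNReal.ofReal (5 ^ n) * 2)) * ∫⁻ x in Q',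
          ∑' k : ℕ, {x | κ * (2 ^ k * t) ≤ σ x}.indicator (fun _ => ENNReal.ofReal (2 ^ k)) x := by
          rw [ENNReal.tsum_mul_left, lintegral_tsum]
          exact fun k => aemeasurable_const.indicator₀ (hN k)
      _ ≤ (ENNReal.ofReal (2 * t) * (ENNReal.ofReal (5 ^ n) * 2)) * ∫⁻ x in Q',
          ENNReal.ofReal (2 / (κ * t)) * ENNReal.ofReal (σ x) := by
          gcongr with x
          rw [← ENNReal.ofReal_mul (by positivity)]
          refine le_trans (le_of_eq ?_) ((tsum_two_pow_le (t := σ x / (κ * t))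
            (div_nonneg (hσ0 x).le (by positivity))).trans (ENNReal.ofReal_le_ofReal
              (le_of_eq (by ring))))
          refine tsum_congr fun k => ?_
          rw [indicator_apply]
          refine if_congr ?_ rfl rfl
          rw [mem_ofPred_eq, le_div_iff₀ (by positivity)]
          exact iff_of_eq (congrArg (· ≤ σ x) (by ring))
      _ < ∞ := by
          rw [lintegral_const_mul' _ _ ENNReal.ofReal_ne_top, hQ', ← ofReal_setIntegral_cube hσi hσ0]
          exact ENNReal.mul_lt_top (ENNReal.mul_lt_top ENNReal.ofReal_lt_top
            (ENNReal.mul_lt_top ENNReal.ofReal_lt_top (by simp)))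
            (ENNReal.mul_lt_top ENNReal.ofReal_lt_top ENNReal.ofReal_lt_top)
  exact ((setLIntegral_mono' measurableSet_cube hpt).trans_lt hfin).ne

end Maximal

section Sparse

variable {n : ℕ} {𝒮 : Set (Set (Fin n → ℝ))}

lemma IsDyadicGrid.exists_hcube {𝒟 : Set (Set (Fin n → ℝ))} (h𝒟 : IsDyadicGrid 𝒟)
    {Q : Set (Fin n → ℝ)} (hQ : Q ∈ 𝒟) : ∃ (a : Fin n → ℝ) (l : ℝ), 0 < l ∧ Q = hcube a l := by
  obtain ⟨k, a, rfl⟩ := h𝒟.1 Q hQ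
  exact ⟨a, 2 ^ k, by positivity, rfl⟩

lemma nonempty_interior_hcube {a : Fin n → ℝ} {l : ℝ} (hl : 0 < l) :
    (interior (hcube a l)).Nonempty := by
  refine ⟨a + fun _ => l / 2, ?_⟩
  rw [hcube, interior_pi_set finite_univ]
  simp [hl]

lemma IsDyadicGrid.countable {𝒟 : Set (Set (Fin n → ℝ))} (h𝒟 : IsDyadicGrid 𝒟) :
    𝒟.Countable := by
  have h : 𝒟 ⊆ ⋃ k : ℤ, {Q | Q ∈ 𝒟 ∧ IsDyadicCubeOf k Q} := fun Q hQ =>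
    mem_iUnion.2 ((h𝒟.1 Q hQ).imp fun _ hk => ⟨hQ, hk⟩)
  refine (countable_iUnion fun k => ?_).mono h
  refine (h𝒟.2.2 k).2.countable_of_nonempty_interior ?_
  rintro Q ⟨hQ, -⟩
  obtain ⟨a, l, hl, rfl⟩ := h𝒟.exists_hcube hQ
  exact nonempty_interior_hcube hl

lemma Eset_subset (Q : Set (Fin n → ℝ)) : Eset 𝒮 Q ⊆ Q := sdiff_subset

lemma pairwiseDisjoint_Eset (hnest : ∀ Q ∈ 𝒮, ∀ P ∈ 𝒮, Q ⊆ P ∨ P ⊆ Q ∨ Disjoint Q P) :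
    𝒮.PairwiseDisjoint (Eset 𝒮) := by
  have key : ∀ Q ∈ 𝒮, ∀ P, Q ⊂ P → Disjoint (Eset 𝒮 Q) (Eset 𝒮 P) := by
    intro Q hQ P hlt
    refine Set.disjoint_left.2 fun x hxQ hxP => hxP.2 ?_
    exact mem_iUnion₂.2 ⟨Q, ⟨hQ, hlt⟩, hxQ.1⟩
  intro Q hQ P hP hne
  rcases hnest Q hQ P hP with h | h | h
  · exact key Q hQ P (h.ssubset_of_ne hne)
  · exact (key P hP Q (h.ssubset_of_ne hne.symm)).symm
  · exact h.mono (Eset_subset Q) (Eset_subset P)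

lemma measurableSet_Eset (hc : 𝒮.Countable) (hm : ∀ Q ∈ 𝒮, MeasurableSet Q)
    {Q : Set (Fin n → ℝ)} (hQ : Q ∈ 𝒮) : MeasurableSet (Eset 𝒮 Q) :=
  (hm Q hQ).diff (MeasurableSet.biUnion (hc.mono fun _ h => h.1) fun P hP => hm P hP.1)

lemma volume_le_two_mul_Eset (hS : IsSparse 𝒮) {Q : Set (Fin n → ℝ)} (hQ : Q ∈ 𝒮)
    (hfin : volume Q ≠ ∞) : volume Q ≤ 2 * volume (Eset 𝒮 Q) := by
  have h1 : volume Q ≤ volume (Eset 𝒮 Q) + volume Q / 2 :=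
    calc volume Q ≤ volume (Eset 𝒮 Q ∪ strictUnion 𝒮 Q) := measure_mono (by
            rw [Eset, sdiff_union_self]; exact subset_union_left)
      _ ≤ volume (Eset 𝒮 Q) + volume (strictUnion 𝒮 Q) := measure_union_le _ _
      _ ≤ _ := by gcongr; exact hS Q hQ
  have h2 : volume Q / 2 ≤ volume (Eset 𝒮 Q) := by
    have h3 : volume Q / 2 ≠ ∞ := ENNReal.div_ne_top hfin (by simp)
    rw [← ENNReal.add_halves (volume Q)] at h1
    rw [ENNReal.add_halves] at h1
    nth_rewrite 1 [← ENNReal.add_halves (volume Q)] at h1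
    exact (ENNReal.add_le_add_iff_right h3).1 h1
  calc volume Q = 2 * (volume Q / 2) := by
        rw [ENNReal.mul_div_cancel (by simp) (by simp)]
    _ ≤ _ := by gcongr

lemma lintegral_sparseM_le {p : ℝ} (hp : 0 < p) (hc : 𝒮.Countable)
    (hm : ∀ Q ∈ 𝒮, MeasurableSet Q) (hdisj : 𝒮.PairwiseDisjoint (Eset 𝒮))
    {f w : (Fin n → ℝ) → ℝ} {A : Set (Fin n → ℝ)}
    (hw : AEMeasurable w (volume.restrict A)) :
    ∫⁻ x in A, sparseM 𝒮 f x ^ p * ENNReal.ofReal (w x) ≤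
      ∑' Q : 𝒮, ENNReal.ofReal (avg Q.1 f) ^ p *
        ∫⁻ x in Eset 𝒮 Q.1 ∩ A, ENNReal.ofReal (w x) := by
  have := hc.to_subtype
  have hE : ∀ Q : 𝒮, MeasurableSet (Eset 𝒮 Q.1) := fun Q => measurableSet_Eset hc hm Q.2
  have hpt : ∀ x, sparseM 𝒮 f x ^ p * ENNReal.ofReal (w x) ≤ ∑' Q : 𝒮,
      (Eset 𝒮 Q.1).indicator
        (fun x => ENNReal.ofReal (avg Q.1 f) ^ p * ENNReal.ofReal (w x)) x := by
    intro x
    by_cases hx : ∃ Q : 𝒮, x ∈ Eset 𝒮 Q.1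
    · obtain ⟨Q, hQ⟩ := hx
      have h1 : sparseM 𝒮 f x = ENNReal.ofReal (avg Q.1 f) := by
        rw [sparseM, tsum_eq_single Q, indicator_of_mem hQ]
        intro P hP
        refine indicator_of_notMem (fun hxP => ?_) _
        exact Set.disjoint_left.1 (hdisj P.2 Q.2 (fun h => hP (Subtype.ext h))) hxP hQ
      rw [h1]
      refine le_trans (le_of_eq ?_) (ENNReal.le_tsum Q)
      rw [indicator_of_mem hQ]
    · push Not at hx
      have h1 : sparseM 𝒮 f x = 0 := by
        rw [sparseM, ENNReal.tsum_eq_zero]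
        exact fun Q => indicator_of_notMem (hx Q) _
      rw [h1, ENNReal.zero_rpow_of_pos hp, zero_mul]
      exact zero_le
  refine (lintegral_mono hpt).trans ?_
  rw [lintegral_tsum fun Q => (hw.ennreal_ofReal.const_mul _).indicator (hE Q)]
  refine ENNReal.tsum_le_tsum fun Q => ?_
  rw [lintegral_indicator (hE Q), Measure.restrict_restrict (hE Q),
    lintegral_const_mul'' _ (hw.ennreal_ofReal.mono_measure
      (Measure.restrict_mono inter_subset_right le_rfl))]

end Sparse

section Packing

variable {n : ℕ} {𝒮 : Set (Set (Fin n → ℝ))} {c : Fin n → ℝ} {L : ℝ} {σ : (Fin n → ℝ) → ℝ}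
  {a : Set (Fin n → ℝ) → Fin n → ℝ} {l : Set (Fin n → ℝ) → ℝ}

/-- The cube of side `l` inside `cube c L` obtained by translating `cube a l`. -/
def shiftCube (c : Fin n → ℝ) (L : ℝ) (a : Fin n → ℝ) (l : ℝ) : Set (Fin n → ℝ) :=
  cube (shiftCorner c L a l) l

lemma avg_hcube_le {a b : Fin n → ℝ} {l : ℝ} {R P : Set (Fin n → ℝ)} (hl : 0 < l)
    (hR : MeasurableSet R) (hP : MeasurableSet P)
    (hσi : LocallyIntegrable σ volume) (hσ0 : ∀ x, 0 < σ x)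
    (h1 : hcube a l ∩ R ⊆ cube b l) (h2 : hcube a l ∩ R ⊆ P) :
    avg (hcube a l) (R.indicator σ) ≤ avg (cube b l) (P.indicator σ) := by
  rw [avg, avg, volume_hcube hl.le, volume_cube hl.le, setIntegral_indicator hR,
    setIntegral_indicator hP]
  gcongr ?_ * ?_
  exact setIntegral_mono_set ((integrableOn_cube hσi).mono_set inter_subset_left)
    (Filter.Eventually.of_forall fun x => (hσ0 x).le) (subset_inter h1 h2).eventuallyLE

lemma sum_avg_mul_volume_Eset_le (hc : 𝒮.Countable)
    (hm : ∀ Q ∈ 𝒮, MeasurableSet Q) (hdisj : 𝒮.PairwiseDisjoint (Eset 𝒮))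
    (hσi : LocallyIntegrable σ volume) (hσ0 : ∀ x, 0 < σ x)
    {F : Finset (Set (Fin n → ℝ))} (hF : ∀ Q ∈ F, Q ∈ 𝒮) {P : Set (Fin n → ℝ)}
    (hPQ : ∀ Q ∈ F, Q ⊆ P)
    (hl : ∀ Q ∈ F, 0 < l Q) (hlL : ∀ Q ∈ F, l Q ≤ L) (heq : ∀ Q ∈ F, Q = hcube (a Q) (l Q))
    (hne : ∀ Q ∈ F, (Q ∩ cube c L).Nonempty)
    (hlP : l P ≤ L) (hP : P = hcube (a P) (l P))
    (hneP : (P ∩ cube c L).Nonempty) :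
    ∑ Q ∈ F, ENNReal.ofReal (avg Q ((cube c L).indicator σ)) * volume (Eset 𝒮 Q) ≤
      3 ^ n * ∫⁻ y in shiftCube c L (a P) (l P),
        maxHL ((shiftCube c L (a P) (l P)).indicator σ) y := by
  set P' := shiftCube c L (a P) (l P) with hP'
  let B : Set (Fin n → ℝ) → (Fin n → Fin 3) → Set (Fin n → ℝ) := fun Q e =>
    reflect c L e ⁻¹' (Eset 𝒮 Q) ∩ (shiftCube c L (a Q) (l Q) ∩ P')
  have hrm : ∀ e, Measurable (reflect c L e) := fun e => (measurePreserving_reflect e).measurable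
  have hEm : ∀ Q ∈ F, MeasurableSet (Eset 𝒮 Q) := fun Q hQ => measurableSet_Eset hc hm (hF Q hQ)
  have hBm : ∀ e, ∀ Q ∈ F, MeasurableSet (B Q e) := fun e Q hQ =>
    (hrm e (hEm Q hQ)).inter (measurableSet_cube.inter measurableSet_cube)
  have hvol : ∀ Q ∈ F, volume (Eset 𝒮 Q) ≤ ∑ e, volume (B Q e) := by
    intro Q hQ
    have hsub : Eset 𝒮 Q ⊆ ⋃ e, reflect c L e ⁻¹' (B Q e) := by
      intro x hx
      obtain ⟨e, he⟩ := exists_reflect (c := c) (L := L) x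
      refine mem_iUnion.2 ⟨e, ?_, ?_, ?_⟩
      · rw [mem_preimage, reflect_reflect]; exact hx
      · exact he _ _ (hlL Q hQ) (heq Q hQ ▸ hne Q hQ) (heq Q hQ ▸ Eset_subset Q hx)
      · exact he _ _ hlP (hP ▸ hneP) (hP ▸ hPQ Q hQ (Eset_subset Q hx))
    calc volume (Eset 𝒮 Q) ≤ ∑ e, volume (reflect c L e ⁻¹' (B Q e)) :=
          (measure_mono hsub).trans (measure_iUnion_fintype_le _ _)
      _ = _ := Finset.sum_congr rfl fun e _ =>
          (measurePreserving_reflect e).measure_preimage (hBm e Q hQ).nullMeasurableSet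
  have hmax : ∀ Q ∈ F, ∀ e, ∀ y ∈ B Q e, ENNReal.ofReal (avg Q ((cube c L).indicator σ)) ≤
      maxHL (P'.indicator σ) y := by
    intro Q hQ e y hy
    refine le_trans (ENNReal.ofReal_le_ofReal ?_) (ofReal_avg_le_maxHL (hl Q hQ) hy.2.1)
    rw [abs_indicator_of_pos hσ0]
    nth_rewrite 1 [heq Q hQ]
    refine avg_hcube_le (hl Q hQ) measurableSet_cube measurableSet_cube hσi hσ0
      (inter_subset_shift (hlL Q hQ)) ?_
    refine Subset.trans ?_ (inter_subset_shift hlP)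
    rw [← heq Q hQ, ← hP]
    exact inter_subset_inter_left _ (hPQ Q hQ)
  calc ∑ Q ∈ F, ENNReal.ofReal (avg Q ((cube c L).indicator σ)) * volume (Eset 𝒮 Q)
      ≤ ∑ Q ∈ F, ∑ e, ENNReal.ofReal (avg Q ((cube c L).indicator σ)) * volume (B Q e) := by
        refine Finset.sum_le_sum fun Q hQ => ?_
        rw [← Finset.mul_sum]
        gcongr
        exact hvol Q hQ
    _ ≤ ∑ e : Fin n → Fin 3, ∑ Q ∈ F, ∫⁻ y in B Q e, maxHL (P'.indicator σ) y := by
        rw [Finset.sum_comm]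
        refine Finset.sum_le_sum fun e _ => Finset.sum_le_sum fun Q hQ => ?_
        rw [← setLIntegral_const]
        exact setLIntegral_mono' (hBm e Q hQ) (hmax Q hQ e)
    _ ≤ ∑ e : Fin n → Fin 3, ∫⁻ y in P', maxHL (P'.indicator σ) y := by
        refine Finset.sum_le_sum fun e _ => ?_
        rw [← lintegral_biUnion_finset _ (hBm e)]
        · exact lintegral_mono_set (iUnion₂_subset fun Q _ y hy => hy.2.2)
        · intro Q hQ Q' hQ' hQQ
          exact ((hdisj (hF Q hQ) (hF Q' hQ') hQQ).preimage _).mono inter_subset_left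
            inter_subset_left
    _ = _ := by simp

lemma sum_setLIntegral_shiftCube_le
    {F : Finset (Set (Fin n → ℝ))} (hdisj : (F : Set (Set (Fin n → ℝ))).PairwiseDisjoint id)
    (hlL : ∀ Q ∈ F, l Q ≤ L) (heq : ∀ Q ∈ F, Q = hcube (a Q) (l Q))
    (hne : ∀ Q ∈ F, (Q ∩ cube c L).Nonempty) (g : (Fin n → ℝ) → ℝ≥0∞) :
    ∑ Q ∈ F, ∫⁻ x in shiftCube c L (a Q) (l Q), g x ≤ 3 ^ n * ∫⁻ x in cube c L, g x := by
  let B : Set (Fin n → ℝ) → (Fin n → Fin 3) → Set (Fin n → ℝ) := fun Q e =>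
    faceProj c L e ⁻¹' Q ∩ cube c L
  have hBm : ∀ e, ∀ Q ∈ F, MeasurableSet (B Q e) := fun e Q hQ =>
    (measurable_faceProj e (heq Q hQ ▸ measurableSet_hcube)).inter measurableSet_cube
  calc ∑ Q ∈ F, ∫⁻ x in shiftCube c L (a Q) (l Q), g x
      ≤ ∑ Q ∈ F, ∑ e : Fin n → Fin 3, ∫⁻ x in B Q e, g x := by
        refine Finset.sum_le_sum fun Q hQ => ?_
        rw [shiftCube, ← setLIntegral_congr hcube_ae_eq_cube]
        calc ∫⁻ x in hcube (shiftCorner c L (a Q) (l Q)) (l Q), g x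
            ≤ ∫⁻ x in ⋃ e, B Q e, g x := by
              refine lintegral_mono_set fun y hy => ?_
              obtain ⟨e, he⟩ := exists_faceProj (heq Q hQ ▸ hne Q hQ) hy
              rw [← heq Q hQ] at he
              exact mem_iUnion.2 ⟨e, he,
                cube_shiftCorner_subset (hlL Q hQ) (hcube_subset_cube hy)⟩
          _ ≤ _ := by
              rw [← tsum_fintype (L := .unconditional _)]
              exact lintegral_iUnion_le _ _
    _ = ∑ e : Fin n → Fin 3, ∑ Q ∈ F, ∫⁻ x in B Q e, g x := Finset.sum_comm
    _ ≤ ∑ e : Fin n → Fin 3, ∫⁻ x in cube c L, g x := by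
        refine Finset.sum_le_sum fun e _ => ?_
        rw [← lintegral_biUnion_finset _ (hBm e)]
        · exact lintegral_mono_set (iUnion₂_subset fun Q _ => inter_subset_right)
        · intro Q hQ Q' hQ' hQQ
          exact ((hdisj hQ hQ' hQQ).preimage _).mono inter_subset_left inter_subset_left
    _ = _ := by simp

end Packing

section Testing

variable {n : ℕ} {𝒮 : Set (Set (Fin n → ℝ))} {c : Fin n → ℝ} {L : ℝ} {w σ : (Fin n → ℝ) → ℝ}
  {a : Set (Fin n → ℝ) → Fin n → ℝ} {l : Set (Fin n → ℝ) → ℝ} {p : ℝ}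

lemma avg_indicator_self (b : Fin n → ℝ) (r : ℝ) :
    avg (cube b r) ((cube b r).indicator σ) = avg (cube b r) σ := by
  rw [avg, avg, setIntegral_indicator measurableSet_cube, inter_self]

lemma avg_indicator_nonneg (Q R : Set (Fin n → ℝ)) (hσ0 : ∀ x, 0 < σ x) :
    0 ≤ avg Q (R.indicator σ) :=
  mul_nonneg (by positivity)
    (integral_nonneg fun x => Set.indicator_nonneg (fun y _ => (hσ0 y).le) x)

lemma rpow_mul_avg_eq {x v : ℝ} (hp : 1 < p) (hx : 0 ≤ x) (hv : 0 ≤ v) :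
    (x * v ^ (1 / (p - 1))) ^ (p - 1) = x ^ (p - 1) * v := by
  rw [Real.mul_rpow hx (by positivity), ← Real.rpow_mul hv,
    one_div_mul_cancel (by linarith), Real.rpow_one]

lemma testing_term_le (hp : 1 < p) (hS : IsSparse 𝒮) {Q : Set (Fin n → ℝ)} (hQ : Q ∈ 𝒮)
    {b : Fin n → ℝ} {r : ℝ} (hr : 0 < r) (hrL : r ≤ L) (heq : Q = hcube b r)
    (hw0 : ∀ x, 0 < w x) (hσ0 : ∀ x, 0 < σ x)
    (hwi : LocallyIntegrable w volume) (hσi : LocallyIntegrable σ volume) :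
    ENNReal.ofReal (avg Q ((cube c L).indicator σ)) ^ p *
        ∫⁻ x in Eset 𝒮 Q ∩ cube c L, ENNReal.ofReal (w x) ≤
      ENNReal.ofReal ((avg (shiftCube c L b r) σ *
        avg (shiftCube c L b r) w ^ (1 / (p - 1))) ^ (p - 1)) *
      (2 * (ENNReal.ofReal (avg Q ((cube c L).indicator σ)) * volume (Eset 𝒮 Q))) := by
  set m := avg (shiftCube c L b r) σ with hm
  set v := avg (shiftCube c L b r) w with hv
  set d := avg Q ((cube c L).indicator σ) with hd
  have hd0 : 0 ≤ d := avg_indicator_nonneg _ _ hσ0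
  have hm0 : 0 < m := avg_cube_pos hr hσi hσ0
  have hv0 : 0 < v := avg_cube_pos hr hwi hw0
  have hdm : d ≤ m := by
    rw [hd, hm, shiftCube, ← avg_indicator_self, heq]
    exact avg_hcube_le hr measurableSet_cube measurableSet_cube hσi hσ0
      (inter_subset_shift hrL) (inter_subset_shift hrL)
  have hwint : ∫⁻ x in Eset 𝒮 Q ∩ cube c L, ENNReal.ofReal (w x) ≤
      ENNReal.ofReal (v * r ^ n) :=
    calc _ ≤ ∫⁻ x in shiftCube c L b r, ENNReal.ofReal (w x) := by
          refine lintegral_mono_set (Subset.trans ?_ (inter_subset_shift hrL))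
          rw [← heq]
          exact inter_subset_inter_left _ (Eset_subset Q)
      _ = ENNReal.ofReal (v * r ^ n) := by
          rw [shiftCube, ← ofReal_setIntegral_cube hwi hw0, hv, shiftCube, avg_cube hr.le]
          congr 1
          field_simp
  have hvolQ : ENNReal.ofReal (r ^ n) ≤ 2 * volume (Eset 𝒮 Q) := by
    have h1 : volume Q = ENNReal.ofReal (r ^ n) := by rw [heq, volume_hcube hr.le]
    rw [← h1]
    exact volume_le_two_mul_Eset hS hQ (by rw [h1]; exact ENNReal.ofReal_ne_top)
  calc ENNReal.ofReal d ^ p * ∫⁻ x in Eset 𝒮 Q ∩ cube c L, ENNReal.ofReal (w x)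
      ≤ ENNReal.ofReal (d ^ p) * ENNReal.ofReal (v * r ^ n) := by
        rw [ENNReal.ofReal_rpow_of_nonneg hd0 (by linarith)]
        gcongr
    _ ≤ ENNReal.ofReal (m ^ (p - 1) * v * d * r ^ n) := by
        rw [← ENNReal.ofReal_mul (by positivity)]
        refine ENNReal.ofReal_le_ofReal ?_
        have h1 : d ^ p = d * d ^ (p - 1) := by
          rw [← Real.rpow_one_add' hd0 (by linarith)]
          congr 1; ring
        have h2 : d ^ (p - 1) ≤ m ^ (p - 1) := Real.rpow_le_rpow hd0 hdm (by linarith)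
        calc d ^ p * (v * r ^ n) = d ^ (p - 1) * v * d * r ^ n := by rw [h1]; ring
          _ ≤ _ := by gcongr
    _ = ENNReal.ofReal ((m * v ^ (1 / (p - 1))) ^ (p - 1)) *
          (ENNReal.ofReal d * ENNReal.ofReal (r ^ n)) := by
        rw [rpow_mul_avg_eq hp hm0.le hv0.le, ← ENNReal.ofReal_mul hd0,
          ← ENNReal.ofReal_mul (by positivity)]
        congr 1; ring
    _ ≤ ENNReal.ofReal ((m * v ^ (1 / (p - 1))) ^ (p - 1)) *
          (ENNReal.ofReal d * (2 * volume (Eset 𝒮 Q))) := by gcongr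
    _ = _ := by ring

lemma testing_stratum_le (hp : 1 < p) (hS : IsSparse 𝒮) (hc : 𝒮.Countable)
    (hmeas : ∀ Q ∈ 𝒮, MeasurableSet Q)
    (hnest : ∀ Q ∈ 𝒮, ∀ P ∈ 𝒮, Q ⊆ P ∨ P ⊆ Q ∨ Disjoint Q P)
    (hw0 : ∀ x, 0 < w x) (hσ0 : ∀ x, 0 < σ x)
    (hwi : LocallyIntegrable w volume) (hσi : LocallyIntegrable σ volume)
    (hfin : ∀ b r, 0 < r → ∫⁻ x in cube b r, maxHL ((cube b r).indicator σ) x ≠ ∞)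
    {K : ℝ} (hK : ∀ b r, 0 < r → (avg (cube b r) σ * avg (cube b r) w ^ (1 / (p - 1))) ^ (p - 1) *
      AinfFWr σ (cube b r) ≤ K)
    {F : Finset (Set (Fin n → ℝ))} (hF : ∀ Q ∈ F, Q ∈ 𝒮)
    (hl : ∀ Q ∈ F, 0 < l Q) (hlL : ∀ Q ∈ F, l Q ≤ L) (heq : ∀ Q ∈ F, Q = hcube (a Q) (l Q))
    (hne : ∀ Q ∈ F, (Q ∩ cube c L).Nonempty) {β : ℝ} (hβ : 0 < β)
    (hlow : ∀ Q ∈ F, β ≤ avg (shiftCube c L (a Q) (l Q)) σ *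
        avg (shiftCube c L (a Q) (l Q)) w ^ (1 / (p - 1)))
    (hup : ∀ Q ∈ F, avg (shiftCube c L (a Q) (l Q)) σ *
        avg (shiftCube c L (a Q) (l Q)) w ^ (1 / (p - 1)) ≤ Real.exp 1 * β) :
    ∑ Q ∈ F, ENNReal.ofReal (avg Q ((cube c L).indicator σ)) ^ p *
        ∫⁻ x in Eset 𝒮 Q ∩ cube c L, ENNReal.ofReal (w x) ≤
      ENNReal.ofReal (2 * 9 ^ n * Real.exp 1 ^ (p - 1) * K) *
        ∫⁻ x in cube c L, ENNReal.ofReal (σ x) := by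
  classical
  have hp0 : 0 ≤ p - 1 := by linarith
  set t : Set (Fin n → ℝ) → ℝ≥0∞ := fun Q => ENNReal.ofReal (avg Q ((cube c L).indicator σ)) ^ p *
    ∫⁻ x in Eset 𝒮 Q ∩ cube c L, ENNReal.ofReal (w x) with ht
  set Fmax := F.filter fun P => Maximal (· ∈ F) P with hFmax
  have hFm : ∀ P ∈ Fmax, P ∈ F := fun P hP => (Finset.mem_filter.1 hP).1
  have hdisjF : (Fmax : Set (Set (Fin n → ℝ))).PairwiseDisjoint id := by
    intro P hP Q hQ hPQ
    obtain ⟨hP1, hP2⟩ := Finset.mem_filter.1 hP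
    obtain ⟨hQ1, hQ2⟩ := Finset.mem_filter.1 hQ
    rcases hnest P (hF P hP1) Q (hF Q hQ1) with h | h | h
    · exact absurd (hP2.eq_of_subset hQ1 h) hPQ
    · exact absurd (hQ2.eq_of_subset hP1 h).symm hPQ
    · exact h
  have htree : ∀ P ∈ Fmax, ∑ Q ∈ F.filter (· ⊆ P), t Q ≤
      ENNReal.ofReal (2 * 3 ^ n * Real.exp 1 ^ (p - 1) * K) *
        ∫⁻ x in shiftCube c L (a P) (l P), ENNReal.ofReal (σ x) := by
    intro P hP
    have hPF := hFm P hP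
    have hsub : ∀ Q ∈ F.filter (· ⊆ P), Q ∈ F := fun Q hQ => (Finset.mem_filter.1 hQ).1
    set P' := shiftCube c L (a P) (l P) with hP'
    have hAinf : ∫⁻ y in P', maxHL (P'.indicator σ) y =
        ENNReal.ofReal (AinfFWr σ P') * ∫⁻ x in P', ENNReal.ofReal (σ x) := by
      have h1 : 0 < ∫ x in P', σ x := setIntegral_cube_pos (hl P hPF) hσi hσ0
      have h2 : ENNReal.ofReal (∫ x in P', σ x) = ∫⁻ x in P', ENNReal.ofReal (σ x) :=
        ofReal_setIntegral_cube hσi hσ0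
      rw [← h2, AinfFWr, ← ENNReal.ofReal_mul (by positivity), div_mul_cancel₀ _ h1.ne']
      exact (ENNReal.ofReal_toReal (hfin _ _ (hl P hPF))).symm
    have hAinf0 : 0 ≤ AinfFWr σ P' :=
      div_nonneg ENNReal.toReal_nonneg (setIntegral_cube_pos (hl P hPF) hσi hσ0).le
    calc ∑ Q ∈ F.filter (· ⊆ P), t Q
        ≤ ∑ Q ∈ F.filter (· ⊆ P), ENNReal.ofReal ((Real.exp 1 * β) ^ (p - 1)) *
          (2 * (ENNReal.ofReal (avg Q ((cube c L).indicator σ)) * volume (Eset 𝒮 Q))) := by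
          refine Finset.sum_le_sum fun Q hQ => ?_
          have hQF := hsub Q hQ
          refine (testing_term_le hp hS (hF Q hQF) (hl Q hQF) (hlL Q hQF) (heq Q hQF)
            hw0 hσ0 hwi hσi).trans ?_
          exact mul_le_mul_left (ENNReal.ofReal_le_ofReal
            (Real.rpow_le_rpow (hβ.le.trans (hlow Q hQF)) (hup Q hQF) hp0)) _
      _ ≤ ENNReal.ofReal ((Real.exp 1 * β) ^ (p - 1)) *
          (2 * (3 ^ n * ∫⁻ y in P', maxHL (P'.indicator σ) y)) := by
          rw [← Finset.mul_sum, ← Finset.mul_sum]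
          gcongr
          exact sum_avg_mul_volume_Eset_le hc hmeas (pairwiseDisjoint_Eset hnest) hσi hσ0
            (fun Q hQ => hF Q (hsub Q hQ)) (fun Q hQ => (Finset.mem_filter.1 hQ).2)
            (fun Q hQ => hl Q (hsub Q hQ)) (fun Q hQ => hlL Q (hsub Q hQ))
            (fun Q hQ => heq Q (hsub Q hQ)) (fun Q hQ => hne Q (hsub Q hQ))
            (hlL P hPF) (heq P hPF) (hne P hPF)
      _ = ENNReal.ofReal (2 * 3 ^ n * Real.exp 1 ^ (p - 1) * (β ^ (p - 1) * AinfFWr σ P')) *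
          ∫⁻ x in P', ENNReal.ofReal (σ x) := by
          rw [hAinf, Real.mul_rpow (by positivity) hβ.le,
            ENNReal.ofReal_mul (by positivity), ENNReal.ofReal_mul (by positivity),
            ENNReal.ofReal_mul (by positivity), ENNReal.ofReal_mul (by positivity),
            ENNReal.ofReal_mul (by positivity), ENNReal.ofReal_pow (by norm_num)]
          simp only [ENNReal.ofReal_ofNat]
          ring
      _ ≤ _ := by
          gcongr
          refine le_trans ?_ (hK (shiftCorner c L (a P) (l P)) _ (hl P hPF))
          exact mul_le_mul_of_nonneg_right (Real.rpow_le_rpow hβ.le (hlow P hPF) hp0) hAinf0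
  calc ∑ Q ∈ F, t Q ≤ ∑ Q ∈ F, ∑ P ∈ Fmax, if Q ⊆ P then t Q else 0 := by
        refine Finset.sum_le_sum fun Q hQ => ?_
        obtain ⟨P, hQP, hP⟩ := F.exists_le_maximal hQ
        have hP' : P ∈ Fmax := Finset.mem_filter.2 ⟨hP.1, hP⟩
        have h := Finset.single_le_sum (f := fun P => if Q ⊆ P then t Q else 0)
          (fun _ _ => zero_le) hP'
        exact (if_pos hQP).symm.trans_le h
    _ = ∑ P ∈ Fmax, ∑ Q ∈ F.filter (· ⊆ P), t Q := by
        rw [Finset.sum_comm]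
        exact Finset.sum_congr rfl fun P _ => (Finset.sum_filter _ _).symm
    _ ≤ ∑ P ∈ Fmax, ENNReal.ofReal (2 * 3 ^ n * Real.exp 1 ^ (p - 1) * K) *
        ∫⁻ x in shiftCube c L (a P) (l P), ENNReal.ofReal (σ x) := Finset.sum_le_sum htree
    _ ≤ ENNReal.ofReal (2 * 3 ^ n * Real.exp 1 ^ (p - 1) * K) *
        (3 ^ n * ∫⁻ x in cube c L, ENNReal.ofReal (σ x)) := by
        rw [← Finset.mul_sum]
        gcongr
        exact sum_setLIntegral_shiftCube_le hdisjF (fun Q hQ => hlL Q (hFm Q hQ))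
          (fun Q hQ => heq Q (hFm Q hQ)) (fun Q hQ => hne Q (hFm Q hQ)) _
    _ = _ := by
        rw [← mul_assoc]
        congr 1
        have h3 : (3 : ℝ≥0∞) ^ n = ENNReal.ofReal (3 ^ n) := by
          rw [ENNReal.ofReal_pow (by norm_num)]; simp
        rw [h3, mul_comm, ← ENNReal.ofReal_mul (by positivity)]
        congr 1
        rw [show (9 : ℝ) = 3 * 3 by norm_num, mul_pow]
        ring

lemma testing_large_le (hp : 1 < p) (hc : 𝒮.Countable)
    (hmeas : ∀ Q ∈ 𝒮, MeasurableSet Q) (hdisj : 𝒮.PairwiseDisjoint (Eset 𝒮))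
    (hL : 0 < L) (hw0 : ∀ x, 0 < w x) (hσ0 : ∀ x, 0 < σ x)
    (hwi : LocallyIntegrable w volume) (hσi : LocallyIntegrable σ volume)
    {F : Finset (Set (Fin n → ℝ))} (hF : ∀ Q ∈ F, Q ∈ 𝒮)
    (heq : ∀ Q ∈ F, Q = hcube (a Q) (l Q))
    (hlarge : ∀ Q ∈ F, L < l Q ∨ Q ∩ cube c L = ∅) :
    ∑ Q ∈ F, ENNReal.ofReal (avg Q ((cube c L).indicator σ)) ^ p *
        ∫⁻ x in Eset 𝒮 Q ∩ cube c L, ENNReal.ofReal (w x) ≤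
      ENNReal.ofReal ((avg (cube c L) σ * avg (cube c L) w ^ (1 / (p - 1))) ^ (p - 1)) *
        ∫⁻ x in cube c L, ENNReal.ofReal (σ x) := by
  have hm0 : 0 < avg (cube c L) σ := avg_cube_pos hL hσi hσ0
  have hv0 : 0 < avg (cube c L) w := avg_cube_pos hL hwi hw0
  have hEm : ∀ Q ∈ F, MeasurableSet (Eset 𝒮 Q ∩ cube c L) := fun Q hQ =>
    (measurableSet_Eset hc hmeas (hF Q hQ)).inter measurableSet_cube
  have havg : ∀ Q ∈ F, avg Q ((cube c L).indicator σ) ≤ avg (cube c L) σ := by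
    intro Q hQ
    have hint : ∫ x in Q, (cube c L).indicator σ x = ∫ x in Q ∩ cube c L, σ x :=
      setIntegral_indicator measurableSet_cube
    rcases hlarge Q hQ with h | h
    · have h1 : (volume Q).toReal = l Q ^ n := by
        rw [heq Q hQ, volume_hcube (hL.trans h).le, ← heq Q hQ,
          ENNReal.toReal_ofReal (pow_nonneg (hL.trans h).le n)]
      rw [avg_cube hL.le, avg, h1, hint]
      have h2 : ∫ x in Q ∩ cube c L, σ x ≤ ∫ x in cube c L, σ x :=
        setIntegral_mono_set (integrableOn_cube hσi)
          (Filter.Eventually.of_forall fun x => (hσ0 x).le) inter_subset_right.eventuallyLE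
      have h3 := (setIntegral_cube_pos (a := c) hL hσi hσ0).le
      calc (l Q ^ n)⁻¹ * ∫ x in Q ∩ cube c L, σ x ≤ (l Q ^ n)⁻¹ * ∫ x in cube c L, σ x := by
            have := hL.trans h
            gcongr
        _ ≤ _ := by gcongr
    · rw [avg, hint, h]
      simpa using hm0.le
  calc ∑ Q ∈ F, ENNReal.ofReal (avg Q ((cube c L).indicator σ)) ^ p *
        ∫⁻ x in Eset 𝒮 Q ∩ cube c L, ENNReal.ofReal (w x)
      ≤ ∑ Q ∈ F, ENNReal.ofReal (avg (cube c L) σ) ^ p *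
        ∫⁻ x in Eset 𝒮 Q ∩ cube c L, ENNReal.ofReal (w x) := by
        refine Finset.sum_le_sum fun Q hQ => ?_
        gcongr
        exact havg Q hQ
    _ ≤ ENNReal.ofReal (avg (cube c L) σ) ^ p * ∫⁻ x in cube c L, ENNReal.ofReal (w x) := by
        rw [← Finset.mul_sum, ← lintegral_biUnion_finset _ hEm]
        · gcongr
          exact iUnion₂_subset fun Q _ => inter_subset_right
        · intro Q hQ P hP hQP
          exact (hdisj (hF Q hQ) (hF P hP) hQP).mono inter_subset_left inter_subset_left
    _ = _ := by
        have hw1 : ∫ x in cube c L, w x = avg (cube c L) w * L ^ n := by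
          rw [avg_cube hL.le]; field_simp
        have hσ1 : ∫ x in cube c L, σ x = avg (cube c L) σ * L ^ n := by
          rw [avg_cube hL.le]; field_simp
        rw [← ofReal_setIntegral_cube hwi hw0, ← ofReal_setIntegral_cube hσi hσ0, hw1, hσ1,
          ENNReal.ofReal_rpow_of_nonneg hm0.le (by linarith),
          rpow_mul_avg_eq hp hm0.le hv0.le, ← ENNReal.ofReal_mul (by positivity),
          ← ENNReal.ofReal_mul (by positivity)]
        congr 1
        have h1 : avg (cube c L) σ ^ p = avg (cube c L) σ * avg (cube c L) σ ^ (p - 1) := by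
          rw [← Real.rpow_one_add' hm0.le (by linarith)]
          congr 1; ring
        rw [h1]
        ring

lemma one_le_AinfFWr {b : Fin n → ℝ} {r : ℝ} (hr : 0 < r) (hσ0 : ∀ x, 0 < σ x)
    (hσi : LocallyIntegrable σ volume)
    (hfin : ∫⁻ x in cube b r, maxHL ((cube b r).indicator σ) x ≠ ∞) :
    1 ≤ AinfFWr σ (cube b r) := by
  have hpos := setIntegral_cube_pos (a := b) hr hσi hσ0
  rw [AinfFWr, one_le_div hpos, ← ENNReal.ofReal_le_iff_le_toReal hfin]
  have h1 : ENNReal.ofReal (∫ x in cube b r, σ x) =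
      ∫⁻ _ in cube b r, ENNReal.ofReal (avg (cube b r) σ) := by
    rw [setLIntegral_const, volume_cube hr.le,
      ← ENNReal.ofReal_mul (avg_cube_pos hr hσi hσ0).le, avg_cube hr.le]
    congr 1
    field_simp
  rw [h1]
  refine setLIntegral_mono' measurableSet_cube fun y hy => ?_
  have h2 := ofReal_avg_le_maxHL (f := (cube b r).indicator σ) hr hy
  rwa [abs_indicator_of_pos hσ0, avg_indicator_self] at h2

/-- The testing inequality in terms of upper bounds for the two weight characteristics. -/
lemma testing_le (hp : 1 < p) {𝒟 : Set (Set (Fin n → ℝ))} (h𝒟 : IsDyadicGrid 𝒟) (h𝒮 : 𝒮 ⊆ 𝒟)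
    (hS : IsSparse 𝒮) (hL : 0 < L) (hw0 : ∀ x, 0 < w x)
    (hσ : ∀ x, σ x = w x ^ (-(1 / (p - 1))))
    (hwi : LocallyIntegrable w volume) (hσi : LocallyIntegrable σ volume)
    {T K : ℝ} (hT : ∀ b r, 0 < r → avg (cube b r) σ * avg (cube b r) w ^ (1 / (p - 1)) ≤ T)
    (hK : ∀ b r, 0 < r → (avg (cube b r) σ * avg (cube b r) w ^ (1 / (p - 1))) ^ (p - 1) *
      AinfFWr σ (cube b r) ≤ K) :
    ∫⁻ x in cube c L, sparseM 𝒮 ((cube c L).indicator σ) x ^ p * ENNReal.ofReal (w x) ≤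
      ENNReal.ofReal ((2 * 9 ^ n * Real.exp 1 ^ (p - 1) + 1) * (1 + Real.log T) * K *
        ∫ x in cube c L, σ x) := by
  classical
  have hs : 0 ≤ 1 / (p - 1) := one_div_nonneg.2 (by linarith)
  have hσ0 : ∀ x, 0 < σ x := fun x => by rw [hσ]; exact Real.rpow_pos_of_pos (hw0 x) _
  have hone : ∀ b r, 0 < r → 1 ≤ avg (cube b r) σ * avg (cube b r) w ^ (1 / (p - 1)) :=
    fun b r hr => one_le_avg_mul_avg_rpow hr hs hw0 hσ hwi hσi
  have hT1 : 1 ≤ T := (hone c L hL).trans (hT c L hL)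
  have hfin : ∀ b r, 0 < r → ∫⁻ x in cube b r, maxHL ((cube b r).indicator σ) x ≠ ∞ :=
    fun b r hr => lintegral_maxHL_ne_top hr hs hw0 hσ hwi hσi (by linarith) hT
  have hKR : (avg (cube c L) σ * avg (cube c L) w ^ (1 / (p - 1))) ^ (p - 1) ≤ K := by
    refine le_trans (le_mul_of_one_le_right ?_ (one_le_AinfFWr hL hσ0 hσi (hfin c L hL)))
      (hK c L hL)
    exact Real.rpow_nonneg (zero_le_one.trans (hone c L hL)) _
  have hK0 : 0 ≤ K := (Real.rpow_nonneg (zero_le_one.trans (hone c L hL)) _).trans hKR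
  have hlogT : 0 ≤ Real.log T := Real.log_nonneg hT1
  have hex : ∀ Q : Set (Fin n → ℝ), ∃ q : (Fin n → ℝ) × ℝ, Q ∈ 𝒮 → 0 < q.2 ∧ Q = hcube q.1 q.2 := by
    intro Q
    by_cases hQ : Q ∈ 𝒮
    · obtain ⟨a, l, h⟩ := h𝒟.exists_hcube (h𝒮 hQ)
      exact ⟨(a, l), fun _ => h⟩
    · exact ⟨0, fun h => absurd h hQ⟩
  choose q hq using hex
  have hc : 𝒮.Countable := h𝒟.countable.mono h𝒮
  have hmeas : ∀ Q ∈ 𝒮, MeasurableSet Q := fun Q hQ => (hq Q hQ).2 ▸ measurableSet_hcube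
  have hnest : ∀ Q ∈ 𝒮, ∀ P ∈ 𝒮, Q ⊆ P ∨ P ⊆ Q ∨ Disjoint Q P := fun Q hQ P hP =>
    h𝒟.2.1 Q (h𝒮 hQ) P (h𝒮 hP)
  have hdisj := pairwiseDisjoint_Eset hnest
  refine (lintegral_sparseM_le (by linarith) hc hmeas hdisj
    (integrableOn_cube hwi).aemeasurable).trans ?_
  set t : Set (Fin n → ℝ) → ℝ≥0∞ := fun Q => ENNReal.ofReal (avg Q ((cube c L).indicator σ)) ^ p *
    ∫⁻ x in Eset 𝒮 Q ∩ cube c L, ENNReal.ofReal (w x) with ht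
  change ∑' Q : 𝒮, t Q.1 ≤ _
  rw [ENNReal.tsum_eq_iSup_sum]
  refine iSup_le fun F₀ => ?_
  set F : Finset (Set (Fin n → ℝ)) := F₀.map (Function.Embedding.subtype _) with hFdef
  have hF : ∀ Q ∈ F, Q ∈ 𝒮 := fun Q hQ => Finset.property_of_mem_map_subtype F₀ hQ
  have hsum : ∑ Q ∈ F₀, t Q.1 = ∑ Q ∈ F, t Q := by rw [hFdef, Finset.sum_map]; rfl
  rw [hsum, ← Finset.sum_filter_add_sum_filter_not F
    fun Q => (q Q).2 ≤ L ∧ (Q ∩ cube c L).Nonempty]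
  set A : Set (Fin n → ℝ) → ℝ := fun Q => avg (shiftCube c L (q Q).1 (q Q).2) σ *
    avg (shiftCube c L (q Q).1 (q Q).2) w ^ (1 / (p - 1)) with hA
  set S := ∫⁻ x in cube c L, ENNReal.ofReal (σ x) with hSdef
  have hsmall : ∑ Q ∈ F with (q Q).2 ≤ L ∧ (Q ∩ cube c L).Nonempty, t Q ≤
      ENNReal.ofReal (1 + Real.log T) *
        (ENNReal.ofReal (2 * 9 ^ n * Real.exp 1 ^ (p - 1) * K) * S) := by
    set F₁ := F.filter fun Q => (q Q).2 ≤ L ∧ (Q ∩ cube c L).Nonempty with hF₁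
    have hF₁' : ∀ Q ∈ F₁, Q ∈ 𝒮 ∧ (q Q).2 ≤ L ∧ (Q ∩ cube c L).Nonempty := fun Q hQ =>
      ⟨hF Q (Finset.mem_filter.1 hQ).1, (Finset.mem_filter.1 hQ).2⟩
    have hA1 : ∀ Q ∈ F₁, 1 ≤ A Q := fun Q hQ => hone _ _ (hq Q (hF₁' Q hQ).1).1
    have hAT : ∀ Q ∈ F₁, A Q ≤ T := fun Q hQ => hT _ _ (hq Q (hF₁' Q hQ).1).1
    have hmaps : ∀ Q ∈ F₁, ⌊Real.log (A Q)⌋₊ ∈ Finset.range (⌊Real.log T⌋₊ + 1) := fun Q hQ => by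
      rw [Finset.mem_range, Nat.lt_succ_iff]
      exact Nat.floor_mono (Real.log_le_log (by linarith [hA1 Q hQ]) (hAT Q hQ))
    rw [← Finset.sum_fiberwise_of_maps_to hmaps]
    calc _ ≤ ∑ k ∈ Finset.range (⌊Real.log T⌋₊ + 1),
          ENNReal.ofReal (2 * 9 ^ n * Real.exp 1 ^ (p - 1) * K) * S := by
          refine Finset.sum_le_sum fun k _ => ?_
          have hsub : ∀ Q ∈ F₁.filter fun Q => ⌊Real.log (A Q)⌋₊ = k,
              Q ∈ F₁ ∧ ⌊Real.log (A Q)⌋₊ = k := fun Q hQ => Finset.mem_filter.1 hQ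
          refine testing_stratum_le (a := fun Q => (q Q).1) (l := fun Q => (q Q).2)
            (β := Real.exp k) hp hS hc hmeas hnest hw0 hσ0 hwi hσi
            hfin hK (fun Q hQ => (hF₁' Q (hsub Q hQ).1).1)
            (fun Q hQ => (hq Q (hF₁' Q (hsub Q hQ).1).1).1)
            (fun Q hQ => (hF₁' Q (hsub Q hQ).1).2.1)
            (fun Q hQ => (hq Q (hF₁' Q (hsub Q hQ).1).1).2)
            (fun Q hQ => (hF₁' Q (hsub Q hQ).1).2.2) (Real.exp_pos _) ?_ ?_
          · intro Q hQ
            obtain ⟨hQ1, hQ2⟩ := hsub Q hQ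
            have h1 := hA1 Q hQ1
            change _ ≤ A Q
            rw [← Real.le_log_iff_exp_le (by linarith), ← hQ2]
            exact Nat.floor_le (Real.log_nonneg h1)
          · intro Q hQ
            obtain ⟨hQ1, hQ2⟩ := hsub Q hQ
            have h1 := hA1 Q hQ1
            change A Q ≤ _
            rw [← Real.exp_add, ← Real.log_le_iff_le_exp (by linarith), ← hQ2, add_comm]
            exact (Nat.lt_floor_add_one _).le
      _ ≤ _ := by
          rw [Finset.sum_const, Finset.card_range, nsmul_eq_mul]
          gcongr
          rw [← ENNReal.ofReal_natCast]
          refine ENNReal.ofReal_le_ofReal ?_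
          push_cast
          linarith [Nat.floor_le hlogT]
  have hlarge : ∑ Q ∈ F with ¬ ((q Q).2 ≤ L ∧ (Q ∩ cube c L).Nonempty), t Q ≤
      ENNReal.ofReal K * S := by
    have hsub : ∀ Q ∈ F.filter fun Q => ¬ ((q Q).2 ≤ L ∧ (Q ∩ cube c L).Nonempty), Q ∈ 𝒮 :=
      fun Q hQ => hF Q (Finset.mem_filter.1 hQ).1
    refine (testing_large_le (a := fun Q => (q Q).1) (l := fun Q => (q Q).2) hp hc hmeas hdisj hL
      hw0 hσ0 hwi hσi hsub (fun Q hQ => (hq Q (hsub Q hQ)).2) fun Q hQ => ?_).trans ?_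
    · have h1 := (Finset.mem_filter.1 hQ).2
      rw [not_and_or, not_le, not_nonempty_iff_eq_empty] at h1
      exact h1
    · gcongr
  refine (add_le_add hsmall hlarge).trans ?_
  rw [hSdef, ← ofReal_setIntegral_cube hσi hσ0]
  have hR0 := (setIntegral_cube_pos (a := c) hL hσi hσ0).le
  rw [← ENNReal.ofReal_mul (by positivity), ← ENNReal.ofReal_mul (by positivity),
    ← ENNReal.ofReal_mul (by positivity), ← ENNReal.ofReal_add (by positivity) (by positivity)]
  refine ENNReal.ofReal_le_ofReal ?_
  have h1 : 0 ≤ Real.log T * (K * ∫ x in cube c L, σ x) := by positivity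
  nlinarith

end Testing

/-- Testing bound for the sparse maximal operator with one-supremum mixed
`A_{p'}`-`A_∞` (Fujii–Wilson) constant and a logarithmic factor:
`∫_R M^𝒮(χ_R σ)^p w ≲ (1 + log [σ]_{A_{p'}}) [σ]^p_{(A_{p'})^{1/p'}(A_∞)^{1/p}} σ(R)`. -/
theorem stmt19 (p : ℝ) (hp : 1 < p) (n : ℕ) :
    ∃ C > (0 : ℝ), ∀ (𝒟 𝒮 : Set (Set (Fin n → ℝ))),
      IsDyadicGrid 𝒟 → 𝒮 ⊆ 𝒟 → IsSparse 𝒮 →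
      ∀ (w σ : (Fin n → ℝ) → ℝ), (∀ x, 0 < w x) →
      σ = (fun x => w x ^ (-(1 / (p - 1)))) →
      LocallyIntegrable w volume → LocallyIntegrable σ volume →
      BddAbove (Set.range fun Q : {Q : Set (Fin n → ℝ) // IsCube Q} =>
        ApQ (p / (p - 1)) σ Q.1) →
      BddAbove (Set.range fun Q : {Q : Set (Fin n → ℝ) // IsCube Q} =>
        ApQ (p / (p - 1)) σ Q.1 ^ ((p - 1) / p) * AinfFWr σ Q.1 ^ (1 / p)) →
      ∀ R : Set (Fin n → ℝ), IsCube R →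
      ∫⁻ x in R, sparseM 𝒮 (R.indicator σ) x ^ p * ENNReal.ofReal (w x) ≤
        ENNReal.ofReal (C *
          (1 + Real.log (⨆ Q : {Q : Set (Fin n → ℝ) // IsCube Q},
            ApQ (p / (p - 1)) σ Q.1)) *
          (⨆ Q : {Q : Set (Fin n → ℝ) // IsCube Q},
            ApQ (p / (p - 1)) σ Q.1 ^ ((p - 1) / p) * AinfFWr σ Q.1 ^ (1 / p)) ^ p *
          ∫ x in R, σ x) := by
  have hp1 : 0 < p - 1 := by linarith
  have hp0 : 0 < p := by linarith
  refine ⟨2 * 9 ^ n * Real.exp 1 ^ (p - 1) + 1, by positivity, ?_⟩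
  rintro 𝒟 𝒮 h𝒟 h𝒮 hS w σ hw0 hσ hwi hσi hT hK R ⟨c, L, hL, rfl⟩
  have hσ' : ∀ x, σ x = w x ^ (-(1 / (p - 1))) := fun x => congrFun hσ x
  have hσ0 : ∀ x, 0 < σ x := fun x => (hσ' x).symm ▸ Real.rpow_pos_of_pos (hw0 x) _
  have hdual : p / (p - 1) - 1 = 1 / (p - 1) := by field_simp; ring
  have hA : ∀ Q, ApQ (p / (p - 1)) σ Q = avg Q σ * avg Q w ^ (1 / (p - 1)) := by
    intro Q
    have hw : (fun x => σ x ^ (-(1 / (p / (p - 1) - 1)))) = w := by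
      funext x
      rw [hσ', hdual, ← Real.rpow_mul (hw0 x).le,
        show -(1 / (p - 1)) * -(1 / (1 / (p - 1))) = 1 by field_simp, Real.rpow_one]
    rw [ApQ, hw, hdual]
  refine testing_le hp h𝒟 h𝒮 hS hL hw0 hσ' hwi hσi (fun b r hr => ?_) fun b r hr => ?_
  · rw [← hA]
    exact le_ciSup hT ⟨cube b r, isCube_cube hr⟩
  · rw [← hA]
    have hA0 : 0 ≤ ApQ (p / (p - 1)) σ (cube b r) := by
      rw [hA]
      exact mul_nonneg (avg_cube_pos hr hσi hσ0).le
        (Real.rpow_nonneg (avg_cube_pos hr hwi hw0).le _)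
    have hF0 : 0 ≤ AinfFWr σ (cube b r) :=
      div_nonneg ENNReal.toReal_nonneg (setIntegral_cube_pos hr hσi hσ0).le
    have h := Real.rpow_le_rpow (by positivity) (le_ciSup hK ⟨cube b r, isCube_cube hr⟩) hp0.le
    refine le_of_eq_of_le ?_ h
    rw [Real.mul_rpow (by positivity) (by positivity), ← Real.rpow_mul hA0, ← Real.rpow_mul hF0,
      div_mul_cancel₀ _ hp0.ne', div_mul_cancel₀ _ hp0.ne', Real.rpow_one]
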